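/- arXiv:1108.3531 — 2 statements merged into one kernel-verified Lean document; each statement's English description precedes it below -/
import Mathlib

section
/- Let α, β, c be real parameters. For every infinitely differentiable function f : ℝ → ℝ and every x ≠ 0, the squares of the intertwining operators commute with X: X(J₊²f)(x) = J₊²(Xf)(x) and X(J₋²f)(x) = J₋²(Xf)(x). -/
/-!
Write `J_ε = (Y + εZ)(X - ε/2) - (εω₂ + ω₃)/2`, so that `J₊ = J_1` and `J₋ = J_{-1}`.
The first-order operator `X` and the operators `Y`, `Z` satisfy `{X, Y} = Z + ω₃` and
`{X, Z} = Y + ω₂` (`Xop_Yop`, `Xop_Zop`). Hence, when `ε² = 1`,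
`{X, Y + εZ} = ε(Y + εZ) + (εω₂ + ω₃)`, and composing with `X - ε/2` on the right gives
`{X, J_ε} = ε J_ε` (`Xop_Jε`). Therefore
`X J_ε² = ε J_ε² - J_ε X J_ε = ε J_ε² - J_ε (ε J_ε - J_ε X) = J_ε² X`.

The coefficients are singular at `0`, so all identities are taken pointwise off `0`, on the space
of functions smooth on `ℝ \ {0}`. This space is preserved by all the operators, and the value at
`x ≠ 0` of any of them applied to `f` does not depend on the value `f 0`.
-/

noncomputable section

/-- The big -1 Jacobi operator `L^{(α,β,c)}`: acts on `f` at `x ≠ 0` by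
`g₀(x)(f(-x) - f(x)) - g₁(x) f'(-x)`, where the last term is `g₁(x)` times the
value at `x` of the derivative of the reflected function `t ↦ f (-t)`,
which equals `-f'(-x)`. -/
noncomputable def Lop (α β c : ℝ) (f : ℝ → ℝ) (x : ℝ) : ℝ :=
  ((α + β + 1) * x ^ 2 + (c * α - β) * x + c) / x ^ 2 * (f (-x) - f x)
    - (2 * (x - 1) * (x + c) / x) * deriv f (-x)

/-- The operator `X = (1/2)(L^{(α,β,c)} + (α+β+1) I)`. -/
noncomputable def Xop (α β c : ℝ) (f : ℝ → ℝ) (x : ℝ) : ℝ :=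
  (1 / 2) * (Lop α β c f x + (α + β + 1) * f x)

/-- The operator `Y`: multiplication by `2x`. -/
noncomputable def Yop (f : ℝ → ℝ) (x : ℝ) : ℝ := 2 * x * f x

/-- The operator `Z`: `(Z f)(x) = -(2/x)(c f(x) + (x-1)(x+c) f(-x))`. -/
noncomputable def Zop (c : ℝ) (f : ℝ → ℝ) (x : ℝ) : ℝ :=
  -(2 / x) * (c * f x + (x - 1) * (x + c) * f (-x))

/-- The intertwining operator `J₊ = (Y+Z)(X - 1/2) - (ω₂+ω₃)/2`, with
`ω₂ = 2(α - βc)` and `ω₃ = 2(β - αc)`. -/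
noncomputable def Jp (α β c : ℝ) (f : ℝ → ℝ) (x : ℝ) : ℝ :=
  Yop (fun t => Xop α β c f t - (1 / 2) * f t) x
    + Zop c (fun t => Xop α β c f t - (1 / 2) * f t) x
    - (2 * (α - β * c) + 2 * (β - α * c)) / 2 * f x

/-- The intertwining operator `J₋ = (Y-Z)(X + 1/2) + (ω₂-ω₃)/2`, with
`ω₂ = 2(α - βc)` and `ω₃ = 2(β - αc)`. -/
noncomputable def Jm (α β c : ℝ) (f : ℝ → ℝ) (x : ℝ) : ℝ :=
  Yop (fun t => Xop α β c f t + (1 / 2) * f t) x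
    - Zop c (fun t => Xop α β c f t + (1 / 2) * f t) x
    + (2 * (α - β * c) - 2 * (β - α * c)) / 2 * f x

/-- Functions that are smooth on `ℝ \ {0}`, with no condition at `0`. -/
def SmoothOff (f : ℝ → ℝ) : Prop := ContDiffOn ℝ (⊤ : ℕ∞) f {0}ᶜ

/-- The operator `(Y + εZ)(X - ε/2) - (εω₂ + ω₃)/2`, which is `J₊` for `ε = 1` and `J₋` for
`ε = -1`. -/
noncomputable def Jε (ε α β c : ℝ) (f : ℝ → ℝ) (x : ℝ) : ℝ :=
  Yop (fun t => Xop α β c f t - ε / 2 * f t) x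
    + ε * Zop c (fun t => Xop α β c f t - ε / 2 * f t) x
    - (ε * (2 * (α - β * c)) + 2 * (β - α * c)) / 2 * f x

lemma Jp_eq_Jε (α β c : ℝ) : Jp α β c = Jε 1 α β c := by
  funext f x
  simp only [Jp, Jε]
  ring

lemma Jm_eq_Jε (α β c : ℝ) : Jm α β c = Jε (-1) α β c := by
  funext f x
  simp only [Jm, Jε, Yop, Zop]
  ring

namespace SmoothOff

variable {f g : ℝ → ℝ}

lemma differentiableAt (hf : SmoothOff f) {x : ℝ} (hx : x ≠ 0) : DifferentiableAt ℝ f x :=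
  (hf.contDiffAt (isOpen_compl_singleton.mem_nhds hx)).differentiableAt (by simp)

lemma add (hf : SmoothOff f) (hg : SmoothOff g) : SmoothOff (fun x => f x + g x) :=
  ContDiffOn.add hf hg

lemma sub (hf : SmoothOff f) (hg : SmoothOff g) : SmoothOff (fun x => f x - g x) :=
  ContDiffOn.sub hf hg

lemma mul (hf : SmoothOff f) (hg : SmoothOff g) : SmoothOff (fun x => f x * g x) :=
  ContDiffOn.mul hf hg

lemma const (a : ℝ) : SmoothOff (fun _ => a) := contDiffOn_const

lemma id : SmoothOff (fun x => x) := contDiffOn_id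

lemma inv : SmoothOff (fun x => x⁻¹) := contDiffOn_inv ℝ

lemma comp_neg (hf : SmoothOff f) : SmoothOff (fun x => f (-x)) :=
  ContDiffOn.comp hf contDiff_neg.contDiffOn fun x hx => by simpa using hx

lemma deriv (hf : SmoothOff f) : SmoothOff (deriv f) :=
  ContDiffOn.deriv_of_isOpen hf isOpen_compl_singleton (by simp)

lemma Xop (hf : SmoothOff f) (α β c : ℝ) : SmoothOff (Xop α β c f) := by
  have h := ((const (1 / 2)).mul ((((((const (α + β + 1)).mul (id.mul id)).add
    ((const (c * α - β)).mul id)).add (const c)).mul (inv.mul inv)).mul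
      (hf.comp_neg.sub hf) |>.sub
    (((((const 2).mul (id.sub (const 1))).mul (id.add (const c))).mul inv).mul
      hf.deriv.comp_neg) |>.add ((const (α + β + 1)).mul hf)))
  convert h using 2 with x
  simp only [_root_.Xop, Lop]
  ring

lemma Yop (hf : SmoothOff f) : SmoothOff (Yop f) :=
  ((const 2).mul id).mul hf

lemma Zop (hf : SmoothOff f) (c : ℝ) : SmoothOff (Zop c f) := by
  have h := ((const (-2)).mul inv).mul (((const c).mul hf).add
    (((id.sub (const 1)).mul (id.add (const c))).mul hf.comp_neg))
  convert h using 2 with x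
  simp only [_root_.Zop]
  ring

lemma Jε (hf : SmoothOff f) (ε α β c : ℝ) : SmoothOff (Jε ε α β c f) := by
  have hg := (hf.Xop α β c).sub ((const (ε / 2)).mul hf)
  exact (hg.Yop.add ((const ε).mul (hg.Zop c))).sub ((const _).mul hf)

end SmoothOff

lemma Xop_add {f g : ℝ → ℝ} (hf : SmoothOff f) (hg : SmoothOff g) (α β c : ℝ) {x : ℝ}
    (hx : x ≠ 0) :
    Xop α β c (fun t => f t + g t) x = Xop α β c f x + Xop α β c g x := by
  have h : deriv (fun t => f t + g t) (-x) = deriv f (-x) + deriv g (-x) :=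
    deriv_fun_add (hf.differentiableAt (neg_ne_zero.2 hx)) (hg.differentiableAt (neg_ne_zero.2 hx))
  simp only [Xop, Lop, h]
  ring

lemma Xop_const_mul {f : ℝ → ℝ} (a α β c x : ℝ) :
    Xop α β c (fun t => a * f t) x = a * Xop α β c f x := by
  simp only [Xop, Lop, deriv_const_mul_field]
  ring

lemma Xop_sub {f g : ℝ → ℝ} (hf : SmoothOff f) (hg : SmoothOff g) (α β c : ℝ) {x : ℝ}
    (hx : x ≠ 0) :
    Xop α β c (fun t => f t - g t) x = Xop α β c f x - Xop α β c g x := by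
  have h : deriv (fun t => f t - g t) (-x) = deriv f (-x) - deriv g (-x) :=
    deriv_fun_sub (hf.differentiableAt (neg_ne_zero.2 hx)) (hg.differentiableAt (neg_ne_zero.2 hx))
  simp only [Xop, Lop, h]
  ring

/-- The derivative in `X` is local, so the value at `0` is irrelevant. -/
lemma Xop_congr {f g : ℝ → ℝ} (h : ∀ t, t ≠ 0 → f t = g t) (α β c : ℝ) {x : ℝ} (hx : x ≠ 0) :
    Xop α β c f x = Xop α β c g x := by
  have hx' := neg_ne_zero.2 hx
  have hd : deriv f (-x) = deriv g (-x) := Filter.EventuallyEq.deriv_eq <| by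
    filter_upwards [isOpen_ne.mem_nhds hx'] with t ht using h t ht
  simp only [Xop, Lop, hd, h x hx, h _ hx']

lemma Jε_congr {f g : ℝ → ℝ} (h : ∀ t, t ≠ 0 → f t = g t) (ε α β c : ℝ) {x : ℝ} (hx : x ≠ 0) :
    Jε ε α β c f x = Jε ε α β c g x := by
  have hx' := neg_ne_zero.2 hx
  simp only [Jε, Yop, Zop, h x hx, h _ hx', Xop_congr h α β c hx, Xop_congr h α β c hx']

lemma Jε_sub {f g : ℝ → ℝ} (hf : SmoothOff f) (hg : SmoothOff g) (ε α β c : ℝ) {x : ℝ}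
    (hx : x ≠ 0) :
    Jε ε α β c (fun t => f t - g t) x = Jε ε α β c f x - Jε ε α β c g x := by
  simp only [Jε, Yop, Zop, Xop_sub hf hg α β c hx, Xop_sub hf hg α β c (neg_ne_zero.2 hx)]
  ring

lemma Jε_const_mul {f : ℝ → ℝ} (a ε α β c x : ℝ) :
    Jε ε α β c (fun t => a * f t) x = a * Jε ε α β c f x := by
  simp only [Jε, Yop, Zop, Xop_const_mul]
  ring

/-- The relation `{X, Y} = Z + ω₃`. -/
lemma Xop_Yop {f : ℝ → ℝ} (hf : SmoothOff f) (α β c : ℝ) {x : ℝ} (hx : x ≠ 0) :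
    Xop α β c (Yop f) x + Yop (Xop α β c f) x = Zop c f x + 2 * (β - α * c) * f x := by
  have hd : deriv (Yop f) (-x) = 2 * f (-x) + 2 * (-x) * deriv f (-x) := by
    have h := ((hasDerivAt_id (-x)).const_mul 2).mul
      (hf.differentiableAt (neg_ne_zero.2 hx)).hasDerivAt
    simpa using! h.deriv
  simp only [Xop, Lop, hd]
  simp only [Yop, Zop, Xop, Lop]
  field_simp
  ring

/-- The relation `{X, Z} = Y + ω₂`. -/
lemma Xop_Zop {f : ℝ → ℝ} (hf : SmoothOff f) (α β c : ℝ) {x : ℝ} (hx : x ≠ 0) :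
    Xop α β c (Zop c f) x + Zop c (Xop α β c f) x = Yop f x + 2 * (α - β * c) * f x := by
  have hx' := neg_ne_zero.2 hx
  have hd : deriv (Zop c f) (-x) =
      2 / x ^ 2 * (c * f (-x) + (-x - 1) * (-x + c) * f x)
        + 2 / x * (c * deriv f (-x) + (-2 * x + c - 1) * f x
          - (-x - 1) * (-x + c) * deriv f x) := by
    have hi : HasDerivAt (fun t : ℝ => -(2 / t)) (2 / x ^ 2) (-x) := by
      refine ((hasDerivAt_inv hx').const_mul (-2)).congr_deriv ?_ |>.congr_of_eventuallyEq ?_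
      · field_simp
      · exact Filter.Eventually.of_forall fun t => by simp only [div_eq_mul_inv]; ring
    have hq : HasDerivAt (fun t : ℝ => (t - 1) * (t + c)) (-2 * x + c - 1) (-x) :=
      (((hasDerivAt_id (-x)).sub_const 1).mul ((hasDerivAt_id (-x)).add_const c)).congr_deriv
        (by simp only [id]; ring)
    have hn : HasDerivAt (fun t => f (-t)) (-deriv f x) (-x) := by
      have h0 : HasDerivAt f (deriv f x) (- -x) := by
        simpa using (hf.differentiableAt hx).hasDerivAt
      simpa using! h0.comp (-x) (hasDerivAt_neg (-x))
    have h := hi.mul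
      (((hf.differentiableAt hx').hasDerivAt.const_mul c).add (hq.mul hn))
    refine (h.congr_deriv ?_).deriv
    simp only [Pi.add_apply, Pi.mul_apply, neg_neg]
    field_simp
    ring
  simp only [Xop, Lop, hd]
  simp only [Yop, Zop, Xop, Lop, neg_neg]
  field_simp
  ring

/-- The relation `{X, J_ε} = ε J_ε`. -/
lemma Xop_Jε {f : ℝ → ℝ} (hf : SmoothOff f) {ε : ℝ} (hε : ε * ε = 1) (α β c : ℝ) {x : ℝ}
    (hx : x ≠ 0) :
    Xop α β c (Jε ε α β c f) x = ε * Jε ε α β c f x - Jε ε α β c (Xop α β c f) x := by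
  have hX := hf.Xop α β c
  have hεf := (SmoothOff.const (ε / 2)).mul hf
  set g : ℝ → ℝ := fun t => Xop α β c f t - ε / 2 * f t with hg
  have hgs : SmoothOff g := hX.sub hεf
  have hXg : ∀ t, t ≠ 0 →
      Xop α β c g t = Xop α β c (Xop α β c f) t - ε / 2 * Xop α β c f t := fun t ht => by
    rw [hg, Xop_sub hX hεf α β c ht, Xop_const_mul]
  have hY := Xop_Yop hgs α β c hx
  have hZ := Xop_Zop hgs α β c hx
  have hεZ := (SmoothOff.const ε).mul (hgs.Zop c)
  set k : ℝ := (ε * (2 * (α - β * c)) + 2 * (β - α * c)) / 2 with hk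
  have hleft : Xop α β c (Jε ε α β c f) x =
      Xop α β c (Yop g) x + ε * Xop α β c (Zop c g) x - k * Xop α β c f x := by
    change Xop α β c (fun t => (Yop g t + ε * Zop c g t) - k * f t) x = _
    rw [Xop_sub (hgs.Yop.add hεZ) ((SmoothOff.const k).mul hf) α β c hx,
      Xop_add hgs.Yop hεZ α β c hx, Xop_const_mul, Xop_const_mul]
  have hright : Jε ε α β c (Xop α β c f) x =
      Yop (Xop α β c g) x + ε * Zop c (Xop α β c g) x - k * Xop α β c f x := by
    simp only [Jε, Yop, Zop, hXg x hx, hXg (-x) (neg_ne_zero.2 hx), hk]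
  have hmid : Jε ε α β c f x = Yop g x + ε * Zop c g x - k * f x := rfl
  have hgx : g x = Xop α β c f x - ε / 2 * f x := rfl
  rw [hleft, hright, hmid]
  -- `{X, Y + εZ} g = ε (Y + εZ) g + 2 k g`, where `g = (X - ε/2) f`
  linear_combination hY + ε * hZ - Zop c g x * hε + 2 * k * hgx

/-- The relation `[X, J_ε²] = 0`, for `ε = ±1`. -/
lemma Xop_Jε_Jε {f : ℝ → ℝ} (hf : SmoothOff f) {ε : ℝ} (hε : ε * ε = 1) (α β c : ℝ) {x : ℝ}
    (hx : x ≠ 0) :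
    Xop α β c (Jε ε α β c (Jε ε α β c f)) x = Jε ε α β c (Jε ε α β c (Xop α β c f)) x := by
  have hJ := hf.Jε ε α β c
  rw [Xop_Jε hJ hε α β c hx,
    Jε_congr (fun t ht => Xop_Jε hf hε α β c ht) ε α β c hx,
    Jε_sub ((SmoothOff.const ε).mul hJ) ((hf.Xop α β c).Jε ε α β c) ε α β c hx, Jε_const_mul]
  ring

/-- The squares of the intertwining operators commute with `X`:
`[X, J₊²] = [X, J₋²] = 0`. -/
theorem X_commutes_with_J_squares (α β c : ℝ) (f : ℝ → ℝ) (hf : ContDiff ℝ (⊤ : ℕ∞) f)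
    (x : ℝ) (hx : x ≠ 0) :
    Xop α β c (Jp α β c (Jp α β c f)) x = Jp α β c (Jp α β c (Xop α β c f)) x ∧
    Xop α β c (Jm α β c (Jm α β c f)) x = Jm α β c (Jm α β c (Xop α β c f)) x := by
  have hs : SmoothOff f := hf.contDiffOn
  rw [Jp_eq_Jε, Jm_eq_Jε]
  exact ⟨Xop_Jε_Jε hs (by norm_num) α β c hx, Xop_Jε_Jε hs (by norm_num) α β c hx⟩
end
end

section
/- Let α > −1, β > −1 and 0 < c < 1 be real parameters, and let P_n = P_n^{(α,β)}(·;c) be the monic big −1 Jacobi polynomials defined by the three-term recurrence. Then for every natural number n and every x ≠ 0, (L^{(α,β,c)} P_n)(x) = λ_n P_n(x), where λ_n = 2n if n is even and λ_n = −2(α+β+n+1) if n is odd. -/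
/-!
The operator `L` and multiplication by `x` (written `X`) generate a small algebra of
anticommutators. With the reflection operator
`(T f)(x) = (c / x) (f x - f (-x)) + (x + c - 1) f (-x)`, which contains no derivative,
* `L X + X L = -2 (α+β+1) X - 2 (cα-β) - 2 T` (`Lop_bigP_succ`),
* `T X + X T = 2c` (`reflOp_bigP_succ`).

Writing `ε = (-1)^n`, the polynomials satisfy the structure relation
`T P_n = ε (P_{n+1} - u_n P_{n-1}) + t_n P_n` (`reflOp_bigP`). It follows by induction from
`TX + XT = 2c`, the recurrence, and two scalar identities between `b_n`, `u_n` and `t_n`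
(`tcoef_add`, `tcoef_mul`). Since `λ_n = ε (2n+α+β+1) - (α+β+1)`, the eigenvalue equation for
`P_{n+1}` follows from those for `P_n` and `P_{n-1}` by applying `L` to the recurrence and
replacing `LX + XL` and `T P_n` by the expressions above.
-/

noncomputable section

/-- The recurrence coefficient `u_n` of the monic big -1 Jacobi polynomials. -/
noncomputable def ucoef (α β c : ℝ) (n : ℕ) : ℝ :=
  if Even n then (1 - c) ^ 2 * n * (α + β + n) / (α + β + 2 * n) ^ 2
  else (1 + c) ^ 2 * (α + n) * (β + n) / (α + β + 2 * n) ^ 2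

/-- The recurrence coefficient `b_n` of the monic big -1 Jacobi polynomials. -/
noncomputable def bcoef (α β c : ℝ) (n : ℕ) : ℝ :=
  if Even n then
    -c + (c - 1) * n / (α + β + 2 * n) + (1 + c) * (β + n + 1) / (α + β + 2 * n + 2)
  else c + (1 - c) * (n + 1) / (α + β + 2 * n + 2) - (c + 1) * (β + n) / (α + β + 2 * n)

/-- The monic big -1 Jacobi polynomials, defined by `P₋₁ = 0`, `P₀ = 1` and the
three-term recurrence `x P_n(x) = P_{n+1}(x) + b_n P_n(x) + u_n P_{n-1}(x)`. -/
noncomputable def bigP (α β c : ℝ) : ℕ → ℝ → ℝ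
  | 0 => fun _ => 1
  | 1 => fun x => x - bcoef α β c 0
  | (n + 2) => fun x =>
      (x - bcoef α β c (n + 1)) * bigP α β c (n + 1) x - ucoef α β c (n + 1) * bigP α β c n x

/-- The reflection operator `T = (c / x) (1 - R) + (x + c - 1) R`, where `(R f)(x) = f (-x)`. -/
def reflOp (c : ℝ) (f : ℝ → ℝ) (x : ℝ) : ℝ :=
  c / x * (f x - f (-x)) + (x + c - 1) * f (-x)

/-- The diagonal coefficient `t_n` of `T` in the basis `P_n`. -/
def tcoef (α β c : ℝ) (n : ℕ) : ℝ :=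
  -(-1) ^ n * (2 * n + α + β + 1) * bcoef α β c n - (c * α - β)

lemma ucoef_zero (α β c : ℝ) : ucoef α β c 0 = 0 := by simp [ucoef]

/-- The recurrence, uniformly in `n`: at `n = 0` the truncated index `n - 1` is harmless because
`u_0 = 0`. -/
lemma bigP_succ (α β c : ℝ) (n : ℕ) (x : ℝ) :
    bigP α β c (n + 1) x =
      (x - bcoef α β c n) * bigP α β c n x - ucoef α β c n * bigP α β c (n - 1) x := by
  cases n with
  | zero => simp [bigP, ucoef_zero]
  | succ n => simp [bigP]

lemma differentiable_bigP (α β c : ℝ) (n : ℕ) : Differentiable ℝ (bigP α β c n) := by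
  induction n using Nat.strong_induction_on with
  | _ n ih =>
    cases n with
    | zero => simp only [bigP]; fun_prop
    | succ n =>
      have h1 := ih n (by omega)
      have h2 := ih (n - 1) (by omega)
      rw [show bigP α β c (n + 1) = fun x => _ from funext (bigP_succ α β c n)]
      fun_prop

lemma deriv_bigP_succ (α β c : ℝ) (n : ℕ) (x : ℝ) :
    deriv (bigP α β c (n + 1)) x = bigP α β c n x
      + (x - bcoef α β c n) * deriv (bigP α β c n) x
      - ucoef α β c n * deriv (bigP α β c (n - 1)) x := by
  have h1 := (differentiable_bigP α β c n x).hasDerivAt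
  have h2 := (differentiable_bigP α β c (n - 1) x).hasDerivAt
  rw [show bigP α β c (n + 1) = fun x => _ from funext (bigP_succ α β c n)]
  have h := (((hasDerivAt_id' x).sub_const (bcoef α β c n)).mul h1).sub
    (h2.const_mul (ucoef α β c n))
  rw [one_mul] at h
  exact h.deriv

/-- The relation `LX + XL = -2 (α+β+1) X - 2 (cα-β) - 2 T`, applied to the recurrence. -/
lemma Lop_bigP_succ (α β c : ℝ) (n : ℕ) (x : ℝ) (hx : x ≠ 0) :
    Lop α β c (bigP α β c (n + 1)) x =
      -(x + bcoef α β c n) * Lop α β c (bigP α β c n) x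
      - ucoef α β c n * Lop α β c (bigP α β c (n - 1)) x
      - 2 * ((α + β + 1) * x + (c * α - β)) * bigP α β c n x
      - 2 * reflOp c (bigP α β c n) x := by
  simp only [Lop, reflOp, deriv_bigP_succ, bigP_succ α β c n]
  field_simp
  ring

/-- The relation `TX + XT = 2c`, applied to the recurrence. -/
lemma reflOp_bigP_succ (α β c : ℝ) (n : ℕ) (x : ℝ) (hx : x ≠ 0) :
    reflOp c (bigP α β c (n + 1)) x =
      2 * c * bigP α β c n x - (x + bcoef α β c n) * reflOp c (bigP α β c n) x
      - ucoef α β c n * reflOp c (bigP α β c (n - 1)) x := by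
  simp only [reflOp, bigP_succ α β c n]
  field_simp
  ring

/-- Comparison of the `P_{n+1}`-coefficients in `(TX + XT) P_n = 2c P_n`. -/
lemma tcoef_add (α β c : ℝ) (hα : α > -1) (hβ : β > -1) (n : ℕ) :
    tcoef α β c (n + 1) + tcoef α β c n =
      -(-1) ^ n * (bcoef α β c n + bcoef α β c (n + 1)) := by
  have hn : (0 : ℝ) ≤ n := n.cast_nonneg
  have h2 : α + β + 2 * n + 2 ≠ 0 := by linarith
  have h2' : α + β + 2 * (n + 1) ≠ 0 := by linarith
  have h4 : α + β + 2 * (n + 1) + 2 ≠ 0 := by linarith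
  rcases Nat.eq_zero_or_pos n with rfl | hpos
  -- at `n = 0` the denominator `α + β` may vanish, but it occurs only under a zero numerator
  · simp at h2 h2' h4
    simp [tcoef, bcoef]
    field_simp
    ring
  have hn1 : (1 : ℝ) ≤ n := by exact_mod_cast hpos
  have h0 : α + β + 2 * n ≠ 0 := by linarith
  rcases Nat.even_or_odd n with h | h
  · have h' : ¬ Even (n + 1) := by simpa [Nat.even_add_one] using h
    simp only [tcoef, bcoef, h, h', if_true, if_false, h.neg_one_pow, pow_succ]
    push_cast
    field_simp
    ring
  · have h' : Even (n + 1) := h.add_one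
    simp only [tcoef, bcoef, Nat.not_even_iff_odd.2 h, h', if_true, if_false, h.neg_one_pow,
      pow_succ]
    push_cast
    field_simp
    ring

/-- Comparison of the `P_n`-coefficients in `(TX + XT) P_n = 2c P_n`. -/
lemma tcoef_mul (α β c : ℝ) (hα : α > -1) (hβ : β > -1) (n : ℕ) :
    c - tcoef α β c n * bcoef α β c n =
      (-1) ^ n * (ucoef α β c (n + 1) - ucoef α β c n) := by
  have hn : (0 : ℝ) ≤ n := n.cast_nonneg
  have h2 : α + β + 2 * n + 2 ≠ 0 := by linarith
  have h2' : α + β + 2 * (n + 1) ≠ 0 := by linarith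
  rcases Nat.eq_zero_or_pos n with rfl | hpos
  · simp at h2 h2'
    simp [tcoef, bcoef, ucoef]
    field_simp
    ring
  have hn1 : (1 : ℝ) ≤ n := by exact_mod_cast hpos
  have h0 : α + β + 2 * n ≠ 0 := by linarith
  rcases Nat.even_or_odd n with h | h
  · have h' : ¬ Even (n + 1) := by simpa [Nat.even_add_one] using h
    simp only [tcoef, bcoef, ucoef, h, h', if_true, if_false, h.neg_one_pow]
    push_cast
    field_simp
    ring
  · have h' : Even (n + 1) := h.add_one
    simp only [tcoef, bcoef, ucoef, Nat.not_even_iff_odd.2 h, h', if_true, if_false,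
      h.neg_one_pow]
    push_cast
    field_simp
    ring

lemma reflOp_bigP_zero (α β c : ℝ) (hα : α > -1) (hβ : β > -1) (x : ℝ) :
    reflOp c (bigP α β c 0) x = bigP α β c 1 x + tcoef α β c 0 := by
  have h2 : α + β + 2 ≠ 0 := by linarith
  simp [reflOp, bigP, tcoef, bcoef]
  field_simp
  ring

/-- The structure relation: `T` is tridiagonal in the basis `P_n`. -/
lemma reflOp_bigP (α β c : ℝ) (hα : α > -1) (hβ : β > -1) (x : ℝ) (hx : x ≠ 0) (n : ℕ) :
    reflOp c (bigP α β c n) x =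
      (-1) ^ n * (bigP α β c (n + 1) x - ucoef α β c n * bigP α β c (n - 1) x)
        + tcoef α β c n * bigP α β c n x := by
  induction n using Nat.twoStepInduction with
  | zero =>
    rw [reflOp_bigP_zero α β c hα hβ]
    simp [ucoef_zero, bigP]
  | one =>
    have ht := tcoef_add α β c hα hβ 0
    have hm := tcoef_mul α β c hα hβ 0
    have hT := reflOp_bigP_succ α β c 0 x hx
    have r0 := bigP_succ α β c 0 x
    have r1 := bigP_succ α β c 1 x
    have h0 : bigP α β c 0 x = 1 := rfl
    simp only [zero_add, pow_zero, pow_one, ucoef_zero, Nat.sub_self,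
      reflOp_bigP_zero α β c hα hβ, h0] at *
    rw [hT, r1]
    linear_combination (-bigP α β c 1 x) * ht + 2 * hm + tcoef α β c 0 * r0
  | more n ih0 ih1 =>
    have ht0 := tcoef_add α β c hα hβ n
    have ht := tcoef_add α β c hα hβ (n + 1)
    have hm := tcoef_mul α β c hα hβ (n + 1)
    have hT := reflOp_bigP_succ α β c (n + 1) x hx
    have r0 := bigP_succ α β c n x
    have r1 := bigP_succ α β c (n + 1) x
    have r2 := bigP_succ α β c (n + 2) x
    simp only [Nat.add_sub_cancel, pow_succ, show n + 2 - 1 = n + 1 from rfl,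
      show n + 1 + 1 = n + 2 from rfl, show n + 2 + 1 = n + 3 from rfl] at *
    rw [hT, ih0, ih1, r2]
    -- the `P_{n+3}` and `P_{n-1}` terms cancel; `ht`, `hm`, `ht0` compare the coefficients of
    -- `P_{n+2}`, `P_{n+1}`, `P_n`, after `r0`, `r1` remove the products `x P_n`, `x P_{n+1}`
    linear_combination tcoef α β c (n + 1) * r1 + (-1) ^ n * ucoef α β c (n + 1) * r0
      - bigP α β c (n + 2) x * ht + 2 * bigP α β c (n + 1) x * hm
      - ucoef α β c (n + 1) * bigP α β c n x * ht0

/-- The monic big -1 Jacobi polynomials are eigenfunctions of `L^{(α,β,c)}`: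
`L P_n = λ_n P_n`, where `λ_n = 2n` for even `n` and `λ_n = -2(α+β+n+1)` for odd `n`. -/
theorem bigP_eigenfunction (α β c : ℝ) (hα : α > -1) (hβ : β > -1)
    (hc0 : 0 < c) (hc1 : c < 1) (n : ℕ) (x : ℝ) (hx : x ≠ 0) :
    Lop α β c (bigP α β c n) x =
      (if Even n then 2 * (n : ℝ) else -2 * (α + β + n + 1)) * bigP α β c n x := by
  have hlam : (if Even n then 2 * (n : ℝ) else -2 * (α + β + n + 1)) =
      (-1) ^ n * (2 * n + α + β + 1) - (α + β + 1) := by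
    rcases Nat.even_or_odd n with h | h
    · simp [h, h.neg_one_pow]
    · simp [Nat.not_even_iff_odd.2 h, h.neg_one_pow]; ring
  rw [hlam]
  clear hlam
  have h0 : Lop α β c (bigP α β c 0) x = 0 := by simp [Lop, bigP]
  induction n using Nat.twoStepInduction with
  | zero => rw [h0]; simp
  | one =>
    have hL := Lop_bigP_succ α β c 0 x hx
    rw [zero_add] at hL
    rw [hL, h0, reflOp_bigP_zero α β c hα hβ, ucoef_zero]
    simp [bigP, tcoef]
    ring
  | more n ih0 ih1 =>
    have hL := Lop_bigP_succ α β c (n + 1) x hx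
    have r1 := bigP_succ α β c (n + 1) x
    have hT := reflOp_bigP α β c hα hβ x hx (n + 1)
    simp only [Nat.add_sub_cancel, pow_succ, tcoef,
      show n + 1 + 1 = n + 2 from rfl] at *
    rw [hL, hT, ih0, ih1, r1]
    push_cast
    ring
end
end
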